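/- (Sign structure of the curvature-weighted residual at y*.) For the softmax cross-entropy residual and Hessian, each coordinate satisfies (H_z g)_i = p_i (p_i − y_i − C) where C = Σ_k p_k² − p_y; moreover C ≤ p_{y*}, and consequently the curvature gaps satisfy Δ_{j,y*} = (H_z g)_j − (H_z g)_{y*} ≤ 0 for every class j, with Δ_{j,y*} < 0 for at least one j whenever p_{y*} ∈ (0,1). -/

import Mathlib

/-- The softmax map `ℝ^V → ℝ^V`. -/
noncomputable def softmax {V : ℕ} (z : Fin V → ℝ) : Fin V → ℝ :=
  fun i => Real.exp (z i) / ∑ j, Real.exp (z j)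

/-- The one-hot vector of a class index `y`. -/
noncomputable def oneHot {V : ℕ} (y : Fin V) : Fin V → ℝ := Pi.single y 1

/-- The softmax logit Hessian `H_z = diag(p) − p pᵀ`. -/
noncomputable def logitHess {V : ℕ} (p : Fin V → ℝ) : Matrix (Fin V) (Fin V) ℝ :=
  Matrix.diagonal p - Matrix.vecMulVec p p

/-!
The coordinate of `H g` at the true class is at most `-p_y (1 - p_y)²`, because the `y`-term alone
bounds `Σ_k p_k²` from below. Any other coordinate is `p_j (p_j - C)`, and bounding each `p_j` by
`p_{y*}` in `Σ_{j ≠ y} p_j²` gives `C ≤ (p_{y*} - p_y) (1 - p_y) ≤ p_{y*}`. So the coordinate at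
`y*` is nonnegative, hence at least the one at `y`, and it dominates the remaining ones since
`p_j (p_j - C) ≤ p_j (p_{y*} - C) ≤ p_{y*} (p_{y*} - C)`.
-/

section CommRing

variable {ι R : Type*} [Fintype ι] [CommRing R]

/-- The constant `C = Σ_k p_k² − p_y`, the mean under `p` of the coordinates of the residual. -/
def meanResidual (p : ι → R) (y : ι) : R := (∑ k, p k ^ 2) - p y

variable [DecidableEq ι]

/-- The curvature-weighted residual `H g`, with `H = diag(p) − p pᵀ` and `g = p − y`, for an
arbitrary vector `p`. -/
def curvatureResidual (p : ι → R) (y : ι) : ι → R :=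
  (Matrix.diagonal p - Matrix.vecMulVec p p).mulVec (p - Pi.single y 1)

theorem dotProduct_sub_single_one_self (p : ι → R) (y : ι) :
    p ⬝ᵥ (p - Pi.single y 1) = meanResidual p y := by
  rw [dotProduct_sub, dotProduct_single_one]
  simp only [meanResidual, dotProduct, sq]

theorem diagonal_sub_vecMulVec_self_mulVec_apply (p v : ι → R) (i : ι) :
    (Matrix.diagonal p - Matrix.vecMulVec p p).mulVec v i = p i * (v i - p ⬝ᵥ v) := by
  rw [Matrix.sub_mulVec, Pi.sub_apply, Matrix.mulVec_diagonal, Matrix.vecMulVec_mulVec,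
    Pi.smul_apply, op_smul_eq_mul, mul_sub]

theorem curvatureResidual_apply (p : ι → R) (y i : ι) :
    curvatureResidual p y i = p i * (p i - (Pi.single y 1 : ι → R) i - meanResidual p y) := by
  rw [curvatureResidual, diagonal_sub_vecMulVec_self_mulVec_apply, dotProduct_sub_single_one_self,
    Pi.sub_apply]

theorem curvatureResidual_self (p : ι → R) (y : ι) :
    curvatureResidual p y y = p y * (p y - 1 - meanResidual p y) := by
  rw [curvatureResidual_apply, Pi.single_eq_same]

theorem curvatureResidual_of_ne (p : ι → R) {y i : ι} (hi : i ≠ y) :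
    curvatureResidual p y i = p i * (p i - meanResidual p y) := by
  rw [curvatureResidual_apply, Pi.single_eq_of_ne hi, sub_zero]

end CommRing

section OrderedCommRing

variable {ι R : Type*} [Fintype ι] [CommRing R] [LinearOrder R] [IsStrictOrderedRing R]
  {p : ι → R} {y ystar : ι}

theorem add_le_one_of_mem_stdSimplex (hp : p ∈ stdSimplex R ι) {i j : ι} (hij : i ≠ j) :
    p i + p j ≤ 1 :=
  hp.2 ▸ Finset.add_le_sum (fun k _ => hp.1 k) (Finset.mem_univ i) (Finset.mem_univ j) hij

theorem meanResidual_le_sub_mul_one_sub (hp : p ∈ stdSimplex R ι) {m : R}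
    (hm : ∀ j, j ≠ y → p j ≤ m) : meanResidual p y ≤ (m - p y) * (1 - p y) := by
  classical
  have hrest : ∑ j ∈ Finset.univ.erase y, p j = 1 - p y := by
    rw [← hp.2, Finset.sum_erase_eq_sub (Finset.mem_univ y)]
  have hrest_sq : ∑ j ∈ Finset.univ.erase y, p j ^ 2 ≤ m * (1 - p y) := by
    rw [← hrest, Finset.mul_sum]
    refine Finset.sum_le_sum fun j hj => ?_
    rw [sq]
    exact mul_le_mul_of_nonneg_right (hm j (Finset.ne_of_mem_erase hj)) (hp.1 j)
  rw [meanResidual, ← Finset.add_sum_erase _ _ (Finset.mem_univ y)]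
  linarith

theorem neg_mul_one_sub_le_meanResidual (p : ι → R) (y : ι) :
    -(p y * (1 - p y)) ≤ meanResidual p y := by
  have hsq : p y ^ 2 ≤ ∑ k, p k ^ 2 :=
    Finset.single_le_sum (f := fun k => p k ^ 2) (fun k _ => sq_nonneg (p k)) (Finset.mem_univ y)
  rw [meanResidual]
  linarith

theorem meanResidual_le_of_forall_ne_le (hp : p ∈ stdSimplex R ι) {m : R} (hm_nonneg : 0 ≤ m)
    (hm : ∀ j, j ≠ y → p j ≤ m) : meanResidual p y ≤ m := by
  have hy : p y ≤ 1 := (mem_Icc_of_mem_stdSimplex hp y).2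
  calc meanResidual p y ≤ (m - p y) * (1 - p y) := meanResidual_le_sub_mul_one_sub hp hm
    _ = m - p y * (m + (1 - p y)) := by ring
    _ ≤ m := sub_le_self _ (mul_nonneg (hp.1 y) (add_nonneg hm_nonneg (sub_nonneg.2 hy)))

variable [DecidableEq ι]

theorem curvatureResidual_self_le_neg_mul_sq (hy : 0 ≤ p y) :
    curvatureResidual p y y ≤ -(p y * (1 - p y) ^ 2) := by
  have hfactor : p y - 1 - meanResidual p y ≤ -(1 - p y) ^ 2 := by
    linarith [neg_mul_one_sub_le_meanResidual p y]
  calc curvatureResidual p y y = p y * (p y - 1 - meanResidual p y) := curvatureResidual_self p y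
    _ ≤ p y * -(1 - p y) ^ 2 := mul_le_mul_of_nonneg_left hfactor hy
    _ = -(p y * (1 - p y) ^ 2) := mul_neg _ _

theorem curvatureResidual_nonneg_of_forall_ne_le (hp : p ∈ stdSimplex R ι) (hne : ystar ≠ y)
    (hmax : ∀ j, j ≠ y → p j ≤ p ystar) : 0 ≤ curvatureResidual p y ystar := by
  rw [curvatureResidual_of_ne p hne]
  exact mul_nonneg (hp.1 ystar)
    (sub_nonneg.2 (meanResidual_le_of_forall_ne_le hp (hp.1 ystar) hmax))

theorem curvatureResidual_le_of_forall_ne_le (hp : p ∈ stdSimplex R ι) (hne : ystar ≠ y)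
    (hmax : ∀ j, j ≠ y → p j ≤ p ystar) (j : ι) :
    curvatureResidual p y j ≤ curvatureResidual p y ystar := by
  have hstar := curvatureResidual_nonneg_of_forall_ne_le hp hne hmax
  rcases eq_or_ne j y with rfl | hj
  · have hself : 0 ≤ p j * (1 - p j) ^ 2 := mul_nonneg (hp.1 j) (sq_nonneg _)
    linarith [curvatureResidual_self_le_neg_mul_sq (hp.1 j)]
  · have hC : 0 ≤ p ystar - meanResidual p y :=
      sub_nonneg.2 (meanResidual_le_of_forall_ne_le hp (hp.1 ystar) hmax)
    rw [curvatureResidual_of_ne p hj, curvatureResidual_of_ne p hne]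
    calc p j * (p j - meanResidual p y) ≤ p j * (p ystar - meanResidual p y) :=
          mul_le_mul_of_nonneg_left (sub_le_sub_right (hmax j hj) _) (hp.1 j)
      _ ≤ p ystar * (p ystar - meanResidual p y) :=
          mul_le_mul_of_nonneg_right (hmax j hj) hC

theorem curvatureResidual_self_lt_of_forall_ne_le (hp : p ∈ stdSimplex R ι) (hne : ystar ≠ y)
    (hmax : ∀ j, j ≠ y → p j ≤ p ystar) (hy : 0 < p y) (hstar : 0 < p ystar) :
    curvatureResidual p y y < curvatureResidual p y ystar := by
  have hy_lt : p y < 1 := by linarith [add_le_one_of_mem_stdSimplex hp hne]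
  have hself : 0 < p y * (1 - p y) ^ 2 := mul_pos hy (pow_pos (sub_pos.2 hy_lt) 2)
  linarith [curvatureResidual_self_le_neg_mul_sq hy.le,
    curvatureResidual_nonneg_of_forall_ne_le hp hne hmax]

theorem statement18_general (hp : p ∈ stdSimplex R ι) (hne : ystar ≠ y)
    (hmax : ∀ j, j ≠ y → p j ≤ p ystar) :
    (∀ i, curvatureResidual p y i
        = p i * (p i - (Pi.single y 1 : ι → R) i - meanResidual p y)) ∧
    meanResidual p y ≤ p ystar ∧
    (∀ j, curvatureResidual p y j - curvatureResidual p y ystar ≤ 0) ∧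
    (0 < p y → 0 < p ystar → curvatureResidual p y y - curvatureResidual p y ystar < 0) :=
  ⟨curvatureResidual_apply p y,
    meanResidual_le_of_forall_ne_le hp (hp.1 ystar) hmax,
    fun j => sub_nonpos.2 (curvatureResidual_le_of_forall_ne_le hp hne hmax j),
    fun hy hstar => sub_neg.2 (curvatureResidual_self_lt_of_forall_ne_le hp hne hmax hy hstar)⟩

end OrderedCommRing

theorem sum_exp_pos {ι : Type*} [Fintype ι] [Nonempty ι] (z : ι → ℝ) : 0 < ∑ j, Real.exp (z j) :=
  Finset.sum_pos (fun j _ => Real.exp_pos (z j)) Finset.univ_nonempty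

theorem softmax_pos {V : ℕ} [NeZero V] (z : Fin V → ℝ) (i : Fin V) : 0 < softmax z i :=
  div_pos (Real.exp_pos (z i)) (sum_exp_pos z)

theorem softmax_mem_stdSimplex {V : ℕ} [NeZero V] (z : Fin V → ℝ) :
    softmax z ∈ stdSimplex ℝ (Fin V) := by
  refine ⟨fun i => (softmax_pos z i).le, ?_⟩
  simp only [softmax, ← Finset.sum_div]
  exact div_self (sum_exp_pos z).ne'

/-- Sign structure of the curvature-weighted residual at `y*`.
With `p = softmax(z)`, `g = p − y` (one-hot `y`), `H_z = diag(p) − p pᵀ`, and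
`y*` a class maximizing `p_j` over `j ≠ y`: each coordinate satisfies
`(H_z g)_i = p_i (p_i − y_i − C)` with `C = Σ_k p_k² − p_y`; moreover `C ≤ p_{y*}`;
consequently `Δ_{j,y*} = (H_z g)_j − (H_z g)_{y*} ≤ 0` for every class `j`, with
`Δ_{j,y*} < 0` for at least one `j` whenever `p_{y*} ∈ (0,1)`. -/
theorem statement18 (V : ℕ) (hV : 2 ≤ V) (z : Fin V → ℝ) (y ystar : Fin V)
    (hne : ystar ≠ y)
    (hmax : ∀ j, j ≠ y → softmax z j ≤ softmax z ystar) :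
    (∀ i, (logitHess (softmax z)).mulVec (softmax z - oneHot y) i
        = softmax z i * (softmax z i - oneHot y i - ((∑ k, softmax z k ^ 2) - softmax z y))) ∧
    ((∑ k, softmax z k ^ 2) - softmax z y ≤ softmax z ystar) ∧
    (∀ j, (logitHess (softmax z)).mulVec (softmax z - oneHot y) j
        - (logitHess (softmax z)).mulVec (softmax z - oneHot y) ystar ≤ 0) ∧
    (0 < softmax z ystar → softmax z ystar < 1 →
      ∃ j, (logitHess (softmax z)).mulVec (softmax z - oneHot y) j
        - (logitHess (softmax z)).mulVec (softmax z - oneHot y) ystar < 0) := by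
  have : NeZero V := ⟨y.pos.ne'⟩
  obtain ⟨hcoord, hC, hle, hlt⟩ := statement18_general (softmax_mem_stdSimplex z) hne hmax
  exact ⟨hcoord, hC, hle, fun hstar _ => ⟨y, hlt (softmax_pos z y) hstar⟩⟩
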